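/- Let d ≥ 3 and let P be a Mani d-polytope with Γ(P) ≥ 2. Then f₀(P) ≥ d + p(d) + ⌈d/p(d)⌉ + 1. -/

import Mathlib

open scoped RealInnerProductSpace

noncomputable section

/-- We work in `ℝ^d`, modelled as Euclidean space. -/
abbrev Euc (d : ℕ) := EuclideanSpace ℝ (Fin d)

/-- `P` is a polytope: the convex hull of a finite set of points. -/
def IsPolytope {d : ℕ} (P : Set (Euc d)) : Prop :=
  ∃ V : Set (Euc d), V.Finite ∧ P = convexHull ℝ V

/-- `P` is a `d`-polytope in `ℝ^d`: a polytope whose affine span is all of `ℝ^d`. -/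
def IsDPolytope {d : ℕ} (P : Set (Euc d)) : Prop :=
  IsPolytope P ∧ affineSpan ℝ P = ⊤

/-- The vertices of a polytope are its extreme points. -/
def verts {d : ℕ} (P : Set (Euc d)) : Set (Euc d) :=
  Set.extremePoints ℝ P

/-- `[u,v]` is an inner diagonal of `P`: `u`, `v` are distinct vertices and the
relative interior of the segment (the open segment) meets the interior of `P`. -/
def InnerDiagonal {d : ℕ} (P : Set (Euc d)) (u v : Euc d) : Prop :=
  u ∈ verts P ∧ v ∈ verts P ∧ u ≠ v ∧ (openSegment ℝ u v ∩ interior P).Nonempty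

/-- `P` is illuminated: every vertex lies on an inner diagonal. -/
def Illuminated {d : ℕ} (P : Set (Euc d)) : Prop :=
  ∀ v ∈ verts P, ∃ u, InnerDiagonal P u v

/-- A set `U` of vertices illuminates itself if every `v ∈ U` lies on an inner
diagonal `[u,v]` with `u ∈ U`. -/
def IlluminatesItself {d : ℕ} (P : Set (Euc d)) (U : Set (Euc d)) : Prop :=
  ∀ v ∈ U, ∃ u ∈ U, InnerDiagonal P u v

/-- A set `W` of vertices lies opposite the vertex `v ∉ W` if `[v,w]` is an inner
diagonal for all `w ∈ W`, and the remaining vertices illuminate themselves. -/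
def LiesOpposite {d : ℕ} (P : Set (Euc d)) (W : Set (Euc d)) (v : Euc d) : Prop :=
  v ∈ verts P ∧ W ⊆ verts P ∧ v ∉ W ∧ (∀ w ∈ W, InnerDiagonal P v w) ∧
    IlluminatesItself P (verts P \ (W ∪ {v}))

/-- `Γ(P)`: the maximum cardinality of a set lying opposite some vertex (`0` if none). -/
def Gamma {d : ℕ} (P : Set (Euc d)) : ℕ :=
  sSup {n : ℕ | ∃ W v, LiesOpposite P W v ∧ W.ncard = n}

/-- `p(d) = ⌈(√(4d+1) - 1)/2⌉`. -/
def pf (d : ℕ) : ℕ := ⌈(Real.sqrt (4 * d + 1) - 1) / 2⌉₊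

/-- `M(d) = min {2d, d + p(d) + ⌈d/p(d)⌉ + 1}`. -/
def Mf (d : ℕ) : ℕ := min (2 * d) (d + pf d + ⌈(d : ℝ) / (pf d : ℝ)⌉₊ + 1)

/-- A Mani `d`-polytope: an illuminated `d`-polytope with exactly `M(d)` vertices. -/
def IsManiPolytope {d : ℕ} (P : Set (Euc d)) : Prop :=
  IsDPolytope P ∧ Illuminated P ∧ (verts P).ncard = Mf d

/-- A facet of a `d`-polytope: an exposed face of dimension `d - 1`. -/
def IsFacetOf {d : ℕ} (P F : Set (Euc d)) : Prop :=
  IsExposed ℝ P F ∧ Module.finrank ℝ (affineSpan ℝ F).direction = d - 1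

/-- `S` is the vertex set of an (exposed) face of `P`. -/
def IsFaceVertexSet {d : ℕ} (P S : Set (Euc d)) : Prop :=
  ∃ F : Set (Euc d), IsExposed ℝ P F ∧ S = verts P ∩ F

/-- Combinatorial equivalence: a bijection of the vertex sets carrying vertex sets
of faces to vertex sets of faces in both directions. -/
def CombEquiv {d : ℕ} (P Q : Set (Euc d)) : Prop :=
  ∃ f : Euc d → Euc d, Set.BijOn f (verts P) (verts Q) ∧
    ∀ S ⊆ verts P, (IsFaceVertexSet P S ↔ IsFaceVertexSet Q (f '' S))

/-- The `d`-dimensional crosspolytope `conv {±e₁, …, ±e_d}`. -/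
def crossPolytope (d : ℕ) : Set (Euc d) :=
  convexHull ℝ
    {x | ∃ i : Fin d, x = EuclideanSpace.single i 1 ∨ x = -EuclideanSpace.single i 1}

/-- `{u, v}` is the vertex set of an edge (a `1`-dimensional exposed face) of `P`. -/
def IsEdgeVertexSet {d : ℕ} (P : Set (Euc d)) (u v : Euc d) : Prop :=
  ∃ F : Set (Euc d), IsExposed ℝ P F ∧
    Module.finrank ℝ (affineSpan ℝ F).direction = 1 ∧ Set.extremePoints ℝ F = {u, v}

/-!
Call two vertices adjacent if they span an inner diagonal. Let `W`, with `|W| = Γ(P)`, lie opposite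
`v`. The set `U` of remaining vertices illuminates itself, so it is partitioned into stars; say
there are `e` leaves and `k` centers. The leaves at any one center again lie opposite that center,
whence `e ≤ Γ(P) * k`.

A facet through `v` is an independent set, so apart from `v` its vertices, of which there are at
least `d - 1`, all belong to `U`, and at most one per leaf can be chosen. If two leaves share a
center, then a facet through `v` that misses one of them even gives `d ≤ e`. Thus `d ≤ Γ(P) * k`,
and the number `Γ(P) + 1 + e + k` of vertices is bounded below by the AM-GM inequality. Otherwise
`k = e`, and `P` has at least `2 * d + Γ(P) - 1` vertices, too many for a Mani polytope if
`Γ(P) ≥ 2`.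
-/

section StarForest

open Set

variable {α : Type*} {G : SimpleGraph α} {L F U : Set α} {c : α → α} {x y : α}

/-- A star forest in a graph, given by its set `L` of leaves and the map `c` sending each leaf to
the center of its star. The centers are the points of `c '' L`, so every star has a leaf; of the
two vertices of a single edge, one has to be declared the center. -/
structure IsStarForest (G : SimpleGraph α) (L : Set α) (c : α → α) : Prop where
  adj : ∀ x ∈ L, G.Adj x (c x)
  center_notMem : ∀ x ∈ L, c x ∉ L

namespace IsStarForest

lemma mono {L' : Set α} (h : IsStarForest G L c) (hL : L' ⊆ L) : IsStarForest G L' c where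
  adj x hx := h.adj x (hL hx)
  center_notMem x hx hcx := h.center_notMem x (hL hx) (hL hcx)

lemma disjoint_image (h : IsStarForest G L c) : Disjoint L (c '' L) := by
  rw [disjoint_right]
  rintro _ ⟨x, hx, rfl⟩
  exact h.center_notMem x hx

lemma union_image_sep_ne (h : IsStarForest G L c) (hy : y ∉ L) :
    {x ∈ L | c x ≠ y} ∪ c '' {x ∈ L | c x ≠ y} = (L ∪ c '' L) \ ({x ∈ L | c x = y} ∪ {y}) := by
  have := h.center_notMem
  ext z
  simp only [mem_union, mem_sdiff, mem_image, mem_ofPred_eq, mem_singleton_iff]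
  grind

lemma exists_insert_leaf (h : IsStarForest G L c) (hx : x ∉ L ∪ c '' L) (hy : y ∉ L)
    (hxy : G.Adj x y) :
    ∃ c', IsStarForest G (insert x L) c' ∧
      insert x L ∪ c' '' insert x L = insert x (insert y (L ∪ c '' L)) := by
  classical
  have hxL : x ∉ L := fun hxL ↦ hx (.inl hxL)
  have hupd : EqOn (Function.update c x y) c L := fun z hz ↦
    Function.update_of_ne (ne_of_mem_of_not_mem hz hxL) y c
  refine ⟨Function.update c x y, ⟨?_, ?_⟩, ?_⟩
  · rintro z (rfl | hz)
    · simpa using hxy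
    · simpa [hupd hz] using h.adj z hz
  · rintro z (rfl | hz)
    · simpa [hxy.ne'] using hy
    · rw [hupd hz]
      rintro (hcz | hcz)
      · exact hx (.inr ⟨z, hz, hcz⟩)
      · exact h.center_notMem z hz hcz
  · rw [image_insert_eq, hupd.image_eq, Function.update_self, insert_union, union_insert]

lemma exists_insert (h : IsStarForest G L c) (hx : x ∉ L ∪ c '' L) (hxy : G.Adj x y) :
    ∃ L' c', IsStarForest G L' c' ∧ L' ∪ c' '' L' = insert x (insert y (L ∪ c '' L)) := by
  by_cases hy : y ∈ L
  swap
  · exact ⟨_, h.exists_insert_leaf hx hy hxy⟩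
  -- Detach the leaf `y` from its center and make it the center of a star with leaf `x`.
  have hL : insert y (L \ {y}) = L := insert_sdiff_self_of_mem hy
  have himage : insert (c y) (c '' (L \ {y})) = c '' L := by rw [← image_insert_eq, hL]
  have hx' : x ∉ L \ {y} ∪ c '' (L \ {y}) := fun h' ↦
    hx (union_subset_union sdiff_subset (image_mono sdiff_subset) h')
  obtain ⟨c₁, h₁, hverts₁⟩ :=
    (h.mono sdiff_subset).exists_insert_leaf hx' (fun hy' ↦ hy'.2 rfl) hxy
  by_cases hcy : c y ∈ c '' (L \ {y})
  · refine ⟨_, c₁, h₁, ?_⟩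
    rw [hverts₁, ← himage, insert_eq_of_mem hcy, ← insert_union, hL,
      insert_eq_of_mem (mem_union_left _ hy)]
  -- Otherwise `y` was the only leaf of its star, and `c y` becomes a leaf at `y`.
  have hcyL : c y ∉ L := h.center_notMem y hy
  have hcyx : c y ≠ x := fun h' ↦ hx (.inr ⟨y, hy, h'⟩)
  have hcyy : c y ≠ y := (h.adj y hy).ne'
  obtain ⟨c₂, h₂, hverts₂⟩ := h₁.exists_insert_leaf (x := c y) (y := y)
    (by rw [hverts₁]; simp [hcyL, hcyx, hcyy, hcy, -mem_image]) (by simp [hxy.ne'])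
    (h.adj y hy).symm
  refine ⟨_, c₂, h₂, ?_⟩
  rw [hverts₂, hverts₁, ← himage]
  grind

end IsStarForest

lemma exists_isStarForest_union_image_eq (hfin : U.Finite) (hU : ∀ x ∈ U, ∃ y ∈ U, G.Adj x y) :
    ∃ L c, IsStarForest G L c ∧ L ∪ c '' L = U := by
  suffices h : ∃ L c, IsStarForest G L c ∧ U ⊆ L ∪ c '' L ∧ L ∪ c '' L ⊆ U by
    obtain ⟨L, c, h, hsub, hsup⟩ := h
    exact ⟨L, c, h, hsup.antisymm hsub⟩
  refine Finite.induction_on_subset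
    (motive := fun S _ ↦ ∃ L c, IsStarForest G L c ∧ S ⊆ L ∪ c '' L ∧ L ∪ c '' L ⊆ U) U hfin
    ⟨∅, id, ⟨by simp, by simp⟩, by simp, by simp⟩ ?_
  rintro x S hx - - ⟨L, c, h, hsub, hsup⟩
  by_cases hxL : x ∈ L ∪ c '' L
  · exact ⟨L, c, h, insert_subset hxL hsub, hsup⟩
  obtain ⟨y, hy, hxy⟩ := hU x hx
  obtain ⟨L', c', h', hverts⟩ := h.exists_insert hxL hxy
  refine ⟨L', c', h', ?_, ?_⟩ <;> rw [hverts]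
  · exact insert_subset_insert (hsub.trans (subset_insert _ _))
  · exact insert_subset hx (insert_subset hy hsup)

namespace IsStarForest

/-- An independent set contains only one of a center and a leaf chosen at it. -/
lemma ncard_le_of_isIndepSet (h : IsStarForest G L c) (hL : L.Finite) (hF : G.IsIndepSet F)
    (hFL : F ⊆ L ∪ c '' L) : F.ncard ≤ L.ncard := by
  classical
  have hleaf : ∀ y ∈ F, y ∉ L → ∃ x ∈ L, c x = y := fun y hy hyL ↦ (hFL hy).resolve_left hyL
  choose! s hsL hcs using hleaf
  have hne : ∀ x ∈ F, x ∈ L → ∀ y ∈ F, y ∉ L → x ≠ s y := by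
    rintro x hx hxL y hy hyL rfl
    have hadj := h.adj (s y) hxL
    rw [hcs y hy hyL] at hadj
    exact hF hx hy hadj.ne hadj
  refine ncard_le_ncard_of_injOn (fun x ↦ if x ∈ L then x else s x) ?_ ?_ hL
  · intro x hx
    split_ifs with hxL
    exacts [hxL, hsL x hx hxL]
  · intro x hx y hy hxy
    dsimp only at hxy
    split_ifs at hxy with hxL hyL hyL
    · exact hxy
    · exact absurd hxy (hne x hx hxL y hy hyL)
    · exact absurd hxy.symm (hne y hy hyL x hx hxL)
    · rw [← hcs x hx hxL, hxy, hcs y hy hyL]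

lemma ncard_lt_of_isIndepSet {a b : α} (h : IsStarForest G L c) (hL : L.Finite)
    (hF : G.IsIndepSet F) (hFL : F ⊆ L ∪ c '' L) (ha : a ∈ L) (hb : b ∈ L) (hab : a ≠ b)
    (hc : c a = c b) (haF : a ∉ F) : F.ncard < L.ncard := by
  have himage : c '' L = c '' (L \ {a}) := by
    have hca : c a ∈ c '' (L \ {a}) := ⟨b, ⟨hb, hab.symm⟩, hc.symm⟩
    rw [← insert_eq_of_mem hca, ← image_insert_eq, insert_sdiff_self_of_mem ha]
  have hFL' : F ⊆ L \ {a} ∪ c '' (L \ {a}) := by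
    rw [himage] at hFL
    intro x hx
    exact (hFL hx).imp_left fun hxL ↦ ⟨hxL, ne_of_mem_of_not_mem hx haF⟩
  exact ((h.mono sdiff_subset).ncard_le_of_isIndepSet (hL.subset sdiff_subset) hF hFL').trans_lt
    (ncard_sdiff_singleton_lt_of_mem ha hL)

end IsStarForest

lemma ncard_le_mul_ncard_image {β : Type*} (f : α → β) (hL : L.Finite) (n : ℕ)
    (hn : ∀ y ∈ f '' L, {x ∈ L | f x = y}.ncard ≤ n) : L.ncard ≤ n * (f '' L).ncard := by
  classical
  lift L to Finset α using hL
  simp only [← Finset.coe_image, Finset.mem_coe, ncard_coe_finset] at hn ⊢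
  refine Finset.card_le_mul_card_image L n fun y hy ↦ ?_
  rw [← ncard_coe_finset, Finset.coe_filter]
  exact hn y hy

end StarForest

section Arithmetic

lemma pf_le_iff {d m : ℕ} : pf d ≤ m ↔ d ≤ m * (m + 1) := by
  rw [pf, Nat.ceil_le, div_le_iff₀ two_pos, sub_le_iff_le_add, Real.sqrt_le_left (by positivity),
    ← Nat.cast_le (α := ℝ)]
  push_cast
  constructor <;> intro h <;> linarith

lemma ceil_natCast_div_le_iff {d m p : ℕ} (hp : 0 < p) : ⌈(d : ℝ) / p⌉₊ ≤ m ↔ d ≤ m * p := by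
  rw [Nat.ceil_le, div_le_iff₀ (by exact_mod_cast hp)]
  norm_cast

lemma pf_add_ceil_div_pf_le {d g k : ℕ} (h : d ≤ g * k) :
    pf d + ⌈(d : ℝ) / pf d⌉₊ ≤ g + k := by
  have hle : d ≤ pf d * (pf d + 1) := pf_le_iff.1 le_rfl
  have hmin : ∀ m < pf d, m * (m + 1) < d := fun m hm ↦ by
    simpa only [pf_le_iff, not_le] using hm.not_ge
  have amgm : 4 * g * k ≤ (g + k) ^ 2 := four_mul_le_sq_add g k
  generalize pf d = p at *
  obtain _ | q := p
  · simp
  by_contra! hlt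
  by_cases hsq : d ≤ (q + 1) * (q + 1)
  · have hceil : ⌈(d : ℝ) / (q + 1 : ℕ)⌉₊ ≤ q + 1 := (ceil_natCast_div_le_iff q.succ_pos).2 hsq
    have hgk : g + k ≤ 2 * q + 1 := by omega
    have hq : q * (q + 1) < d := hmin q q.lt_succ_self
    have hsum : (g + k) ^ 2 ≤ (2 * q + 1) ^ 2 := Nat.pow_le_pow_left hgk 2
    linarith
  · have hceil : ⌈(d : ℝ) / (q + 1 : ℕ)⌉₊ ≤ q + 2 :=
      (ceil_natCast_div_le_iff q.succ_pos).2 (hle.trans_eq (mul_comm _ _))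
    have hgk : g + k ≤ 2 * (q + 1) := by omega
    have hsum : (g + k) ^ 2 ≤ (2 * (q + 1)) ^ 2 := Nat.pow_le_pow_left hgk 2
    linarith

end Arithmetic

section Functionals

open Submodule

variable {𝕜 : Type*} [Field 𝕜] [LinearOrder 𝕜] [IsStrictOrderedRing 𝕜]

lemma exists_add_mul_nonpos_and_eq_zero {ι : Type*} {A : Set ι} (hA : A.Finite) {f g : ι → 𝕜}
    (hf : ∀ a ∈ A, f a ≤ 0) (hg : ∃ a ∈ A, 0 < g a) :
    ∃ t, (∀ a ∈ A, f a + t * g a ≤ 0) ∧ ∃ a ∈ A, 0 < g a ∧ f a + t * g a = 0 := by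
  obtain ⟨b, ⟨hbA, hgb⟩, hmin⟩ :=
    Set.exists_min_image {a ∈ A | 0 < g a} (fun a ↦ -f a / g a) (hA.sep _) hg
  have ht : 0 ≤ -f b / g b := div_nonneg (neg_nonneg.2 (hf b hbA)) hgb.le
  refine ⟨-f b / g b, fun a ha ↦ ?_, b, hbA, hgb, by field_simp; ring⟩
  obtain hga | hga := le_or_gt (g a) 0
  · exact add_nonpos (hf a ha) (mul_nonpos_of_nonneg_of_nonpos ht hga)
  · have hle := (le_div_iff₀ hga).1 (hmin a ⟨ha, hga⟩)
    linarith

/-- The functional is rotated until the set of tight vectors is maximal. -/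
lemma exists_dual_nonpos_span_insert_eq_top {E : Type*} [AddCommGroup E] [Module 𝕜 E]
    {A : Set E} (hA : A.Finite) (hspan : span 𝕜 A = ⊤) {a₀ : E} {l₀ : Module.Dual 𝕜 E}
    (hl₀ : ∀ a ∈ A, l₀ a ≤ 0) (hl₀a₀ : l₀ a₀ < 0) :
    ∃ l : Module.Dual 𝕜 E, (∀ a ∈ A, l a ≤ 0) ∧ l a₀ < 0 ∧
      span 𝕜 (insert a₀ {a ∈ A | l a = 0}) = ⊤ := by
  have hfin : {T | ∃ l : Module.Dual 𝕜 E,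
      (∀ a ∈ A, l a ≤ 0) ∧ l a₀ < 0 ∧ {a ∈ A | l a = 0} = T}.Finite :=
    hA.finite_subsets.subset (by rintro _ ⟨l, -, -, rfl⟩; exact Set.sep_subset _ _)
  obtain ⟨T, ⟨l, hl, hla₀, rfl⟩, hmax⟩ := hfin.exists_maximal ⟨_, l₀, hl₀, hl₀a₀, rfl⟩
  refine ⟨l, hl, hla₀, by_contra fun hne ↦ ?_⟩
  obtain ⟨g, hg, hgker⟩ := exists_le_ker_of_lt_top _ (lt_top_iff_ne_top.2 hne)
  have hg₀ : ∀ a ∈ insert a₀ {a ∈ A | l a = 0}, g a = 0 := fun a ha ↦ hgker (subset_span ha)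
  obtain ⟨b, hb, hgb⟩ : ∃ b ∈ A, g b ≠ 0 := by
    by_contra! h
    exact hg (LinearMap.ext_on hspan h)
  wlog hpos : 0 < g b generalizing g
  · refine this (-g) (neg_ne_zero.2 hg) ?_ ?_ ?_ ?_
    · simpa using hgker
    · simpa using hg₀
    · simpa using hgb
    · simpa using lt_of_le_of_ne (not_lt.1 hpos) hgb
  obtain ⟨t, hle, a, ha, hga, hzero⟩ := exists_add_mul_nonpos_and_eq_zero hA hl ⟨b, hb, hpos⟩
  have hsub : {a ∈ A | l a = 0} ⊆ {a ∈ A | (l + t • g) a = 0} := fun x hx ↦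
    ⟨hx.1, by simp [hx.2, hg₀ x (.inr hx)]⟩
  have hadm : l a₀ + t * g a₀ < 0 := by simpa [hg₀ a₀ (.inl rfl)] using hla₀
  have ha' : a ∈ {a ∈ A | l a = 0} := hmax ⟨l + t • g, hle, hadm, rfl⟩ hsub ⟨ha, hzero⟩
  exact hga.ne' (hg₀ a (.inr ha'))

end Functionals

section Polytopes

lemma eq_of_isExposed_of_mem_interior {E : Type*} [NormedAddCommGroup E] [NormedSpace ℝ E]
    {A B : Set E} {z : E} (hB : IsExposed ℝ A B) (hzB : z ∈ B) (hzA : z ∈ interior A) : B = A := by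
  obtain ⟨l, rfl⟩ := hB ⟨z, hzB⟩
  have hmax : IsLocalMax l z := by
    filter_upwards [mem_interior_iff_mem_nhds.1 hzA] with y hy using hzB.2 y hy
  have hl : l = 0 := hmax.hasFDerivAt_eq_zero l.hasFDerivAt
  simp [hl]

variable {d : ℕ} {P F : Set (Euc d)} {u v : Euc d}

lemma IsPolytope.isCompact (hP : IsPolytope P) : IsCompact P := by
  obtain ⟨V, hV, rfl⟩ := hP
  exact hV.isCompact_convexHull (𝕜 := ℝ)

lemma IsPolytope.convex (hP : IsPolytope P) : Convex ℝ P := by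
  obtain ⟨V, -, rfl⟩ := hP
  exact convex_convexHull ℝ V

lemma IsPolytope.finite_verts (hP : IsPolytope P) : (verts P).Finite := by
  obtain ⟨V, hV, rfl⟩ := hP
  exact hV.subset extremePoints_convexHull_subset

lemma IsPolytope.convexHull_verts_inter (hP : IsPolytope P) (hF : IsExposed ℝ P F) :
    convexHull ℝ (verts P ∩ F) = F := by
  have hKM := closure_convexHull_extremePoints (hF.isCompact hP.isCompact) (hF.convex hP.convex)
  rw [hF.isExtreme.extremePoints_eq, Set.inter_comm, ← verts] at hKM
  have hfin : (verts P ∩ F).Finite := hP.finite_verts.subset Set.inter_subset_left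
  rwa [(hfin.isCompact_convexHull (𝕜 := ℝ)).isClosed.closure_eq] at hKM

lemma IsPolytope.convexHull_verts (hP : IsPolytope P) : convexHull ℝ (verts P) = P := by
  have h := hP.convexHull_verts_inter (IsExposed.refl (𝕜 := ℝ) P)
  rwa [Set.inter_eq_left.2 (show verts P ⊆ P from extremePoints_subset)] at h

lemma IsPolytope.exists_forall_verts_lt (hP : IsPolytope P) (hv : v ∈ verts P) :
    ∃ f : StrongDual ℝ (Euc d), ∀ w ∈ verts P, w ≠ v → f w < f v := by
  have hnotMem : v ∉ convexHull ℝ (verts P \ {v}) := fun hmem ↦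
    (hP.convex.mem_extremePoints_iff_mem_sdiff_convexHull_sdiff.1 hv).2
      (convexHull_mono (Set.sdiff_subset_sdiff_left extremePoints_subset) hmem)
  have hclosed : IsClosed (convexHull ℝ (verts P \ {v})) :=
    ((hP.finite_verts.subset Set.sdiff_subset).isCompact_convexHull (𝕜 := ℝ)).isClosed
  obtain ⟨f, r, hfr, hrv⟩ :=
    geometric_hahn_banach_closed_point (convex_convexHull ℝ _) hclosed hnotMem
  exact ⟨f, fun w hw hwv ↦ (hfr w (subset_convexHull ℝ _ ⟨hw, hwv⟩)).trans hrv⟩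

lemma IsDPolytope.span_sub_eq_top (hP : IsDPolytope P) (hv : v ∈ verts P) :
    Submodule.span ℝ ((· - v) '' (verts P \ {v})) = ⊤ := by
  have haff : affineSpan ℝ (verts P) = ⊤ := by
    rw [← affineSpan_convexHull, hP.1.convexHull_verts, hP.2]
  rw [← AffineSubspace.direction_top ℝ (Euc d) (Euc d), ← haff, direction_affineSpan,
    vectorSpan_eq_span_vsub_set_right_ne ℝ hv]
  rfl

lemma isFacetOf_toExposed {l : StrongDual ℝ (Euc d)} (hu : l u ≠ l v)
    (hsup : Submodule.span ℝ {u - v} ⊔ vectorSpan ℝ (l.toExposed P) = ⊤) :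
    IsFacetOf P (l.toExposed P) := by
  refine ⟨ContinuousLinearMap.toExposed.isExposed, ?_⟩
  rw [direction_affineSpan]
  have hl : (l : Module.Dual ℝ (Euc d)) ≠ 0 := fun h ↦
    hu (by simp [← ContinuousLinearMap.coe_coe, h])
  have hker := Module.Dual.finrank_ker_add_one_of_ne_zero hl
  have hle : vectorSpan ℝ (l.toExposed P) ≤ (l : Module.Dual ℝ (Euc d)).ker := by
    refine Submodule.span_le.2 ?_
    rintro _ ⟨x, hx, y, hy, rfl⟩
    simpa [sub_eq_zero] using (hy.2 x hx.1).antisymm (hx.2 y hy.1)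
  have hupper := Submodule.finrank_mono hle
  have hlower := Submodule.finrank_add_le_finrank_add_finrank (Submodule.span ℝ {u - v})
    (vectorSpan ℝ (l.toExposed P))
  have huv : u - v ≠ 0 := sub_ne_zero.2 (ne_of_apply_ne l hu)
  rw [hsup, finrank_top, finrank_span_singleton huv] at hlower
  rw [finrank_euclideanSpace_fin] at hker hlower
  omega

lemma IsDPolytope.exists_isFacetOf (hP : IsDPolytope P) (hu : u ∈ verts P) (hv : v ∈ verts P)
    (huv : u ≠ v) : ∃ F, IsFacetOf P F ∧ v ∈ F ∧ u ∉ F := by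
  obtain ⟨f, hf⟩ := hP.1.exists_forall_verts_lt hv
  obtain ⟨l₀, hl, hlu, hspan⟩ := exists_dual_nonpos_span_insert_eq_top
    (hP.1.finite_verts.sdiff.image _) (hP.span_sub_eq_top hv) (a₀ := u - v)
    (l₀ := (f : Module.Dual ℝ (Euc d)))
    (by rintro _ ⟨w, ⟨hw, hwv⟩, rfl⟩; simpa using (hf w hw hwv).le) (by simpa using hf u hu huv)
  obtain ⟨l, rfl⟩ : ∃ l : StrongDual ℝ (Euc d), (l : Module.Dual ℝ (Euc d)) = l₀ :=
    ⟨LinearMap.toContinuousLinearMap l₀, rfl⟩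
  rw [ContinuousLinearMap.coe_coe, map_sub, sub_neg] at hlu
  have hlP : P ⊆ {x | l x ≤ l v} := by
    rw [← hP.1.convexHull_verts]
    refine convexHull_min (fun w hw ↦ ?_) (convex_halfSpace_le l.isLinear _)
    obtain rfl | hwv := eq_or_ne w v
    · exact le_refl (l _)
    · simpa using hl _ ⟨w, ⟨hw, hwv⟩, rfl⟩
  have hvF : v ∈ l.toExposed P := ⟨extremePoints_subset hv, hlP⟩
  refine ⟨l.toExposed P, isFacetOf_toExposed hlu.ne ?_, hvF,
    fun huF ↦ hlu.not_ge (huF.2 v hvF.1)⟩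
  rw [eq_top_iff, ← hspan, Submodule.span_insert]
  refine sup_le_sup_left (Submodule.span_le.2 ?_) _
  rintro _ ⟨⟨w, ⟨hw, -⟩, rfl⟩, hlw⟩
  have hlwv : l w = l v := by simpa [sub_eq_zero] using hlw
  have hwF : w ∈ l.toExposed P :=
    ⟨extremePoints_subset hw, fun y hy ↦ (hlP hy).trans_eq hlwv.symm⟩
  exact vsub_mem_vectorSpan ℝ hwF hvF

lemma IsFacetOf.le_ncard_verts_inter (hP : IsPolytope P) (hF : IsFacetOf P F)
    (hne : F.Nonempty) : d ≤ (verts P ∩ F).ncard := by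
  have hfin : (verts P ∩ F).Finite := hP.finite_verts.subset Set.inter_subset_left
  have hhull := hP.convexHull_verts_inter hF.1
  have : Finite ↥(verts P ∩ F) := hfin
  have := Fintype.ofFinite ↥(verts P ∩ F)
  have : Nonempty ↥(verts P ∩ F) := by
    rwa [Set.nonempty_coe_sort, ← convexHull_nonempty_iff (𝕜 := ℝ), hhull]
  have h := finrank_vectorSpan_range_add_one_le ℝ (Subtype.val : ↥(verts P ∩ F) → Euc d)
  rw [Subtype.range_coe, ← direction_affineSpan, ← affineSpan_convexHull, hhull, hF.2,
    ← Nat.card_eq_fintype_card, Nat.card_coe_set_eq] at h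
  omega

end Polytopes

section InnerDiagonals

variable {d : ℕ} {P F W L U A : Set (Euc d)} {c : Euc d → Euc d} {u v y : Euc d}

lemma InnerDiagonal.symm (h : InnerDiagonal P u v) : InnerDiagonal P v u :=
  ⟨h.2.1, h.1, h.2.2.1.symm, by rw [openSegment_symm]; exact h.2.2.2⟩

/-- The graph of inner diagonals of `P`, on the whole ambient space: points that are not vertices
of `P` are isolated. -/
def diagonalGraph (P : Set (Euc d)) : SimpleGraph (Euc d) where
  Adj := InnerDiagonal P
  symm := ⟨fun _ _ ↦ InnerDiagonal.symm⟩
  loopless := ⟨fun _ h ↦ h.2.2.1 rfl⟩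

lemma isIndepSet_diagonalGraph_of_isExposed (hP : Convex ℝ P) (hF : IsExposed ℝ P F) (hne : F ≠ P) :
    (diagonalGraph P).IsIndepSet F := by
  rintro x hx y hy - ⟨-, -, -, z, hz, hzP⟩
  exact hne (eq_of_isExposed_of_mem_interior hF ((hF.convex hP).openSegment_subset hx hy hz) hzP)

lemma IlluminatesItself.union (hU : IlluminatesItself P U) (hA : IlluminatesItself P A) :
    IlluminatesItself P (U ∪ A) := by
  rintro v (hv | hv)
  · exact (hU v hv).imp fun _ ↦ And.imp_left .inl
  · exact (hA v hv).imp fun _ ↦ And.imp_left .inr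

lemma IsStarForest.illuminatesItself (h : IsStarForest (diagonalGraph P) L c) :
    IlluminatesItself P (L ∪ c '' L) := by
  rintro _ (hx | ⟨x, hx, rfl⟩)
  · exact ⟨_, .inr ⟨_, hx, rfl⟩, (h.adj _ hx).symm⟩
  · exact ⟨x, .inl hx, h.adj x hx⟩

namespace LiesOpposite

lemma union_subset (hW : LiesOpposite P W v) : W ∪ {v} ⊆ verts P :=
  Set.union_subset hW.2.1 (Set.singleton_subset_iff.2 hW.1)

lemma illuminatesItself_union (hW : LiesOpposite P W v) (hne : W.Nonempty) :
    IlluminatesItself P (W ∪ {v}) := by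
  have hstar : IsStarForest (diagonalGraph P) W (fun _ ↦ v) :=
    ⟨fun w hw ↦ (hW.2.2.2.1 w hw).symm, fun _ _ ↦ hW.2.2.1⟩
  simpa only [hne.image_const] using hstar.illuminatesItself

lemma exists_isStarForest (hP : IsPolytope P) (hW : LiesOpposite P W v) :
    ∃ L c, IsStarForest (diagonalGraph P) L c ∧ L ∪ c '' L = verts P \ (W ∪ {v}) :=
  exists_isStarForest_union_image_eq hP.finite_verts.sdiff fun x hx ↦
    (hW.2.2.2.2 x hx).imp fun _ ↦ And.imp_right InnerDiagonal.symm

lemma fiber (hW : LiesOpposite P W v) (hne : W.Nonempty)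
    (h : IsStarForest (diagonalGraph P) L c) (hLc : L ∪ c '' L = verts P \ (W ∪ {v}))
    (hy : y ∈ c '' L) : LiesOpposite P {x ∈ L | c x = y} y := by
  have hsub : L ∪ c '' L ⊆ verts P := hLc ▸ Set.sdiff_subset
  have hyL : y ∉ L := Set.disjoint_right.1 h.disjoint_image hy
  refine ⟨hsub (.inr hy), fun x hx ↦ hsub (.inl hx.1), fun hy' ↦ hyL hy'.1, ?_, ?_⟩
  · rintro x ⟨hx, rfl⟩
    exact (h.adj x hx).symm
  have hstar : {x ∈ L | c x = y} ∪ {y} ⊆ verts P \ (W ∪ {v}) := by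
    rw [← hLc]
    exact Set.union_subset_union (Set.sep_subset _ _) (Set.singleton_subset_iff.2 hy)
  have hrest : verts P \ ({x ∈ L | c x = y} ∪ {y}) =
      ({x ∈ L | c x ≠ y} ∪ c '' {x ∈ L | c x ≠ y}) ∪ (W ∪ {v}) := by
    rw [h.union_image_sep_ne hyL, hLc, sdiff_right_comm, Set.sdiff_union_of_subset]
    exact Set.subset_sdiff.2 ⟨hW.union_subset, (Set.subset_sdiff.1 hstar).2.symm⟩
  rw [hrest]
  exact (h.mono (Set.sep_subset _ _)).illuminatesItself.union (hW.illuminatesItself_union hne)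

lemma exists_isIndepSet (hP : IsDPolytope P) (hW : LiesOpposite P W v) (hu : u ∈ verts P)
    (huv : u ≠ v) :
    ∃ F ⊆ verts P \ (W ∪ {v}), (diagonalGraph P).IsIndepSet F ∧ u ∉ F ∧ d ≤ F.ncard + 1 := by
  obtain ⟨F, hF, hvF, huF⟩ := hP.exists_isFacetOf hu hW.1 huv
  have hFP : F ≠ P := fun h ↦ huF (h ▸ extremePoints_subset hu)
  have hindep := isIndepSet_diagonalGraph_of_isExposed hP.1.convex hF.1 hFP
  have hcard := hF.le_ncard_verts_inter hP.1 ⟨v, hvF⟩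
  refine ⟨(verts P ∩ F) \ {v}, ?_, hindep.mono fun x hx ↦ hx.1.2, fun h ↦ huF h.1.2, ?_⟩
  · rintro x ⟨⟨hx, hxF⟩, hxv⟩
    refine ⟨hx, not_or_intro (fun hxW ↦ ?_) hxv⟩
    exact hindep hvF hxF (Ne.symm hxv) (hW.2.2.2.1 x hxW)
  · rwa [Set.ncard_sdiff_singleton_add_one (Set.mem_inter hW.1 hvF)
      (hP.1.finite_verts.inter_of_left F)]

lemma ncard_verts (hP : IsPolytope P) (hW : LiesOpposite P W v)
    (h : IsStarForest (diagonalGraph P) L c) (hLc : L ∪ c '' L = verts P \ (W ∪ {v})) :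
    (verts P).ncard = W.ncard + 1 + (L.ncard + (c '' L).ncard) := by
  have hfin := hP.finite_verts
  have hL : L.Finite := hfin.subset fun x hx ↦ (hLc.subset (.inl hx)).1
  rw [← Set.ncard_union_eq h.disjoint_image hL (hL.image c), hLc, Set.union_singleton,
    ← Set.ncard_insert_of_notMem hW.2.2.1 (hfin.subset hW.2.1), ← Set.union_singleton,
    add_comm, Set.ncard_sdiff_add_ncard_of_subset hW.union_subset hfin]

end LiesOpposite

lemma bddAbove_ncard_liesOpposite (hP : IsPolytope P) :
    BddAbove {n : ℕ | ∃ W v, LiesOpposite P W v ∧ W.ncard = n} := by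
  refine ⟨(verts P).ncard, ?_⟩
  rintro _ ⟨W, v, hW, rfl⟩
  exact Set.ncard_le_ncard hW.2.1 hP.finite_verts

lemma LiesOpposite.ncard_le_gamma (hP : IsPolytope P) (hW : LiesOpposite P W v) :
    W.ncard ≤ Gamma P :=
  le_csSup (bddAbove_ncard_liesOpposite hP) ⟨W, v, hW, rfl⟩

lemma exists_liesOpposite_ncard_eq_gamma (hP : IsPolytope P) (h : 0 < Gamma P) :
    ∃ W v, LiesOpposite P W v ∧ W.ncard = Gamma P := by
  refine Nat.sSup_mem (Set.nonempty_iff_ne_empty.2 fun hempty ↦ h.ne' ?_)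
    (bddAbove_ncard_liesOpposite hP)
  rw [Gamma, hempty, csSup_empty, bot_eq_zero]

end InnerDiagonals

theorem mani_gammaTwo_card_general {d : ℕ} {P : Set (Euc d)} (hP : IsDPolytope P)
    (hΓ : 0 < Gamma P) :
    min (2 * d + Gamma P - 1) (d + pf d + ⌈(d : ℝ) / (pf d : ℝ)⌉₊ + 1) ≤ (verts P).ncard := by
  obtain ⟨W, v, hW, hWΓ⟩ := exists_liesOpposite_ncard_eq_gamma hP.1 hΓ
  obtain ⟨w, hw⟩ : W.Nonempty := Set.nonempty_of_ncard_ne_zero (hWΓ.trans_ne hΓ.ne')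
  obtain ⟨L, c, hLc, hverts⟩ := hW.exists_isStarForest hP.1
  have hLsub : L ⊆ verts P := fun x hx ↦ (hverts.subset (.inl hx)).1
  have hL : L.Finite := hP.1.finite_verts.subset hLsub
  have hcard := hW.ncard_verts hP.1 hLc hverts
  by_cases hinj : Set.InjOn c L
  · obtain ⟨F, hFsub, hF, -, hdF⟩ :=
      hW.exists_isIndepSet hP (hW.2.1 hw) (ne_of_mem_of_not_mem hw hW.2.2.1)
    have hFL := hLc.ncard_le_of_isIndepSet hL hF (hFsub.trans hverts.superset)
    have himage := hinj.ncard_image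
    omega
  · obtain ⟨a, ha, b, hb, hc, hab⟩ : ∃ a ∈ L, ∃ b ∈ L, c a = c b ∧ a ≠ b := by
      simpa [Set.InjOn] using hinj
    have hav : a ≠ v := fun h ↦ (hverts.subset (.inl ha)).2 (.inr h)
    obtain ⟨F, hFsub, hF, haF, hdF⟩ := hW.exists_isIndepSet hP (hLsub ha) hav
    have hFL := hLc.ncard_lt_of_isIndepSet hL hF (hFsub.trans hverts.superset) ha hb hab hc haF
    have hfibers : L.ncard ≤ Gamma P * (c '' L).ncard :=
      ncard_le_mul_ncard_image c hL _ fun y hy ↦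
        (hW.fiber ⟨w, hw⟩ hLc hverts hy).ncard_le_gamma hP.1
    have hceil := pf_add_ceil_div_pf_le ((by omega : d ≤ L.ncard).trans hfibers)
    omega

/-- A Mani `d`-polytope (`d ≥ 3`) with `Γ(P) ≥ 2` has at least
`d + p(d) + ⌈d/p(d)⌉ + 1` vertices. -/
theorem mani_gammaTwo_card {d : ℕ} (hd : 3 ≤ d) (P : Set (Euc d))
    (hP : IsManiPolytope P) (hGamma : 2 ≤ Gamma P) :
    d + pf d + ⌈(d : ℝ) / (pf d : ℝ)⌉₊ + 1 ≤ (verts P).ncard := by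
  have hMani := hP.2.2.trans_le (min_le_left _ _)
  exact (min_le_iff.1 (mani_gammaTwo_card_general hP.1 (by omega))).resolve_left (by omega)
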